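/- Let A = {0,…,k−1} for an integer k ≥ 7 and, for each n ≥ 1, let w_n be the concatenation in lexicographic order of all k^n words of length n over A; let x = w₁·w̃₁·w₂·w̃₂·w₃·w̃₃·⋯. Let c(n) denote the number of output symbols written by the deterministic pushdown transducer 𝒯_k after reading the prefix x[1:n] from its initial configuration, where the run is modeled by iterating over the input symbols the transition function on triples (state b ∈ {0,1}, stack s, output count c) starting from (0, [], 0): from (0, s, c) reading a, go to (1, tail s, c) if the head of s equals a, and to (0, a :: s, c+1) otherwise; from (1, s, c) reading a, go to (0, tail s, c+1) if the head of s equals a, and to (0, a :: s, c+2) otherwise. Then the compression ratio ρ = liminf_{n→∞} c(n)·log(k+2)/(n·log k) satisfies ρ < 1, i.e., 𝒯_k compresses the normal sequence x. -/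

import Mathlib

/-!
The stack of `𝒯_k` evolves by the partial involutions `toggle a` ("pop `a` if it is on top, push it
otherwise"), which are genuine involutions on stacks without equal neighbours. Hence reading
`w · w̃` restores the stack (`foldl_toggle_palindrome`), so the stack is empty after every prefix
`P_m = w₁·w̃₁⋯w_m·w̃_m`: exactly half of the `N` steps are pushes, costing one symbol each, and half
are pops, a maximal run of `ℓ` pops costing at most `(ℓ + 1) / 2`. A run of pops can only start at a
letter equal to its predecessor, so if `E` is the number of equal neighbours in the input,
then `4 c ≤ 3 N + 2 E` (`outputCount_bound`).

Among the words of length `n`, each adjacent pair of positions carries equal letters in a fraction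
`1 / k` of the words, and only `k ^ n` pairs of `w_n` straddle two words; summing up gives
`k E ≤ N + 8 k ^ (m + 1)`, while `N ≥ 2 m k ^ m` (`eqPairs_xPrefix`, `length_xPrefix_ge`). So
`c / N ≤ 3/4 + 1/(2k) + 2/m < 6/7 · 0.99` for `m ≥ 100` and `k ≥ 7`, whereas
`(k + 2) ^ 6 ≤ k ^ 7` gives `log (k + 2) / log k ≤ 7/6`.
-/

/-- The word of index `i` (for `0 ≤ i < k^n`) in the lexicographic enumeration of
all words of length `n` over `{0, …, k-1}`: the base-`k` expansion of `i`, most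
significant digit first, padded with zeros to length `n`. -/
def lexWord (k : ℕ) (hk : 0 < k) (n i : ℕ) : List (Fin k) :=
  List.ofFn fun j : Fin n => (⟨i / k ^ (n - 1 - (j : ℕ)) % k, Nat.mod_lt _ hk⟩ : Fin k)

/-- `wn k hk n` is the concatenation, in lexicographic order, of all `k^n` words
of length `n` over the alphabet `{0, …, k-1}`. -/
def wn (k : ℕ) (hk : 0 < k) (n : ℕ) : List (Fin k) :=
  ((List.range (k ^ n)).map (lexWord k hk n)).flatten

/-- The prefix `w₁·w̃₁·w₂·w̃₂·⋯·w_n·w̃_n` of the sequence `x`. -/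
def xPrefix (k : ℕ) (hk : 0 < k) (n : ℕ) : List (Fin k) :=
  ((List.range n).map fun i => wn k hk (i + 1) ++ (wn k hk (i + 1)).reverse).flatten

/-- The infinite sequence `x = w₁·w̃₁·w₂·w̃₂·w₃·w̃₃·⋯` (0-indexed): its `i`-th
symbol is the `i`-th symbol of any sufficiently long prefix `w₁·w̃₁·⋯·w_n·w̃_n`. -/
def x (k : ℕ) (hk : 0 < k) (i : ℕ) : Fin k :=
  (xPrefix k hk (i + 1)).getD i ⟨0, hk⟩

/-- One step of the transducer `𝒯_k`, keeping track of the state (`false`/`true`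
for states 0/1), the stack (top symbol at the head) and the number of output
symbols written so far. -/
def countStep {A : Type*} [DecidableEq A] :
    Bool × List A × ℕ → A → Bool × List A × ℕ
  | (false, s, c), a =>
      if s.head? = some a then (true, s.tail, c) else (false, a :: s, c + 1)
  | (true, s, c), a =>
      if s.head? = some a then (false, s.tail, c + 1) else (false, a :: s, c + 2)

/-- The number of output symbols written by `𝒯_k` while reading `w` from the
initial configuration (state 0, empty stack). -/
def outputCount {A : Type*} [DecidableEq A] (w : List A) : ℕ :=
  (w.foldl countStep (false, [], 0)).2.2

/-! ### Stack and output of the transducer -/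

section Transducer

variable {A : Type*} [DecidableEq A]

/-- The number of positions of `o · l` at which a letter equals its predecessor, where `o` is an
optional letter preceding the word `l`. -/
def eqPairs : Option A → List A → ℕ
  | _, [] => 0
  | o, a :: l => (if o = some a then 1 else 0) + eqPairs (some a) l

/-- The effect on the stack of reading `a`. -/
def toggle (s : List A) (a : A) : List A :=
  if s.head? = some a then s.tail else a :: s

lemma countStep_stack (st : Bool × List A × ℕ) (a : A) :
    (countStep st a).2.1 = toggle st.2.1 a := by
  obtain ⟨b, s, c⟩ := st
  cases b <;> simp only [countStep, toggle] <;> split_ifs <;> rfl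

lemma foldl_countStep_stack (w : List A) (st : Bool × List A × ℕ) :
    (w.foldl countStep st).2.1 = w.foldl toggle st.2.1 := by
  induction w generalizing st with
  | nil => rfl
  | cons a w ih => simp only [List.foldl_cons, ih, countStep_stack]

lemma toggle_reduced {s : List A} (hs : s.IsChain (· ≠ ·)) (a : A) :
    (toggle s a).IsChain (· ≠ ·) := by
  unfold toggle
  split_ifs with h
  · exact hs.tail
  · cases s with
    | nil => simp
    | cons b s =>
      simp only [List.head?_cons, Option.some.injEq] at h
      exact List.isChain_cons_cons.2 ⟨fun e => h e.symm, hs⟩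

lemma toggle_toggle {s : List A} (hs : s.IsChain (· ≠ ·)) (a : A) :
    toggle (toggle s a) a = s := by
  cases s with
  | nil => simp [toggle]
  | cons b s =>
    by_cases h : b = a
    · subst h
      cases s with
      | nil => simp [toggle]
      | cons d s =>
        have : b ≠ d := (List.isChain_cons_cons.1 hs).1
        simp [toggle, this.symm]
    · simp [toggle, h]

/-- Reading a word and then its reverse restores the stack. -/
lemma foldl_toggle_palindrome (w : List A) {s : List A} (hs : s.IsChain (· ≠ ·)) :
    (w ++ w.reverse).foldl toggle s = s := by
  induction w generalizing s with
  | nil => rfl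
  | cons a w ih =>
    have h1 : (a :: w) ++ (a :: w).reverse = a :: ((w ++ w.reverse) ++ [a]) := by simp
    rw [h1, List.foldl_cons, List.foldl_append, ih (toggle_reduced hs a)]
    simpa using toggle_toggle hs a

/-- The potential invariant of the run. Here `o` is the last letter read and `R` is
`3 · (letters read) + (equal neighbours read, twice)`. The three cases are: inside a run of pops of
odd length so far, after an even number of pops, and after a push. -/
def RunInv (o : Option A) (R : ℕ) (st : Bool × List A × ℕ) : Prop :=
  (st.1 = true ∧ 4 * st.2.2 + 4 ≤ R + st.2.1.length) ∨
  (st.1 = false ∧ 4 * st.2.2 + 2 ≤ R + st.2.1.length) ∨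
  (st.1 = false ∧ st.2.1.head? = o ∧ 4 * st.2.2 ≤ R + st.2.1.length)

lemma runInv_step (o : Option A) (R : ℕ) (st : Bool × List A × ℕ) (a : A)
    (h : RunInv o R st) :
    RunInv (some a) (R + 3 + 2 * (if o = some a then 1 else 0)) (countStep st a) := by
  obtain ⟨b, s, c⟩ := st
  cases s with
  | nil =>
    cases b <;> simp [RunInv, countStep] at h ⊢ <;> omega
  | cons d s =>
    by_cases hd : d = a
    · subst hd
      cases b
      · simp only [RunInv, countStep] at h ⊢
        simp only [List.head?_cons, List.tail_cons, List.length_cons, if_true] at h ⊢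
        left
        refine ⟨trivial, ?_⟩
        rcases h with h | h | ⟨_, h, h'⟩
        · simp at h
        · omega
        · rw [if_pos h.symm]; omega
      · simp [RunInv, countStep] at h ⊢
        omega
    · cases b <;> simp [RunInv, countStep, hd] at h ⊢ <;> omega

lemma runInv_foldl (w : List A) (o : Option A) (R : ℕ) (st : Bool × List A × ℕ)
    (h : RunInv o R st) :
    ∃ o', RunInv o' (R + 3 * w.length + 2 * eqPairs o w) (w.foldl countStep st) := by
  induction w generalizing o R st with
  | nil => exact ⟨o, by simpa [eqPairs] using h⟩
  | cons a w ih =>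
    obtain ⟨o', h'⟩ := ih _ _ _ (runInv_step o R st a h)
    refine ⟨o', ?_⟩
    rw [List.foldl_cons]
    convert h' using 1
    simp only [List.length_cons, eqPairs]
    ring

lemma outputCount_bound (w : List A) (hw : w.foldl toggle [] = []) :
    4 * outputCount w ≤ 3 * w.length + 2 * eqPairs none w := by
  obtain ⟨o', h⟩ := runInv_foldl w none 0 (false, [], 0) (by simp [RunInv])
  have hs : (w.foldl countStep (false, [], 0)).2.1 = [] := by
    rw [foldl_countStep_stack]; exact hw
  unfold outputCount
  simp only [RunInv, hs, List.length_nil] at h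
  omega

/-! ### Counting equal neighbours -/

lemma eqPairs_le_none (o : Option A) (w : List A) : eqPairs o w ≤ eqPairs none w + 1 := by
  cases w with
  | nil => simp [eqPairs]
  | cons a w => simp only [eqPairs, reduceCtorEq, if_false]; split_ifs <;> omega

lemma eqPairs_append_le (o : Option A) (u v : List A) :
    eqPairs o (u ++ v) ≤ eqPairs o u + eqPairs none v + 1 := by
  induction u generalizing o with
  | nil => simpa [eqPairs] using eqPairs_le_none o v
  | cons a u ih =>
    have := ih (some a)
    simp only [List.cons_append, eqPairs]; omega

lemma eqPairs_snoc (o : Option A) (u : List A) (a : A) :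
    eqPairs o (u ++ [a]) = eqPairs o u + if u.getLast?.or o = some a then 1 else 0 := by
  induction u generalizing o with
  | nil =>
    simp only [List.nil_append, eqPairs, List.getLast?_nil, Option.none_or]
    by_cases h : o = some a <;> simp [h]
  | cons b u ih =>
    have h : (b :: u).getLast?.or o = u.getLast?.or (some b) := by
      cases u <;> simp [List.getLast?_cons]
    rw [h, List.cons_append, eqPairs, eqPairs, ih]; omega

lemma eqPairs_reverse (w : List A) : eqPairs none w.reverse = eqPairs none w := by
  induction w with
  | nil => rfl
  | cons a w ih =>
    rw [List.reverse_cons, eqPairs_snoc, ih]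
    cases w with
    | nil => simp [eqPairs]
    | cons b w =>
      simp only [eqPairs, List.getLast?_reverse, List.head?_cons, Option.or_none,
        Option.some.injEq, eq_comm, reduceCtorEq, if_false]
      omega

lemma eqPairs_flatten_le (f : ℕ → List A) (N : ℕ) :
    eqPairs none ((List.range N).map f).flatten ≤
      ∑ i ∈ Finset.range N, (eqPairs none (f i) + 1) := by
  induction N with
  | zero => simp [eqPairs]
  | succ N ih =>
    rw [List.range_succ, List.map_append, List.flatten_append, Finset.sum_range_succ]
    have := eqPairs_append_le none ((List.range N).map f).flatten ([N].map f).flatten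
    simp only [List.map_cons, List.map_nil, List.flatten_cons, List.flatten_nil,
      List.append_nil] at this ⊢
    omega

end Transducer

/-! ### The words `w_n` and the prefixes of `x` -/

lemma lexWord_succ (k : ℕ) (hk : 0 < k) (n q r : ℕ) (hr : r < k) :
    lexWord k hk (n + 1) (q * k + r) = lexWord k hk n q ++ [⟨r, hr⟩] := by
  unfold lexWord
  rw [List.ofFn_succ_last]
  congr 1
  · congr 1
    funext j
    have hj := j.2
    have e : n + 1 - 1 - (j : ℕ) = (n - 1 - j) + 1 := by omega
    simp only [Fin.val_castSucc, e, Fin.mk.injEq]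
    rw [pow_succ', ← Nat.div_div_eq_div_mul]
    have : (q * k + r) / k = q := by
      rw [Nat.mul_comm, Nat.mul_add_div hk, Nat.div_eq_of_lt hr, Nat.add_zero]
    rw [this]
  · simp [Nat.mod_eq_of_lt hr]

lemma sum_range_mul_digits (f : ℕ → ℕ) (N k : ℕ) :
    ∑ i ∈ Finset.range (N * k), f i =
      ∑ q ∈ Finset.range N, ∑ r ∈ Finset.range k, f (q * k + r) := by
  induction N with
  | zero => simp
  | succ N ih => rw [Nat.succ_mul, Finset.sum_range_add, ih, Finset.sum_range_succ]

/-- A word of length `n + 1` is a word of length `n` with one letter appended, and only one of the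
`k` possible letters creates a new equal pair. -/
lemma sum_eqPairs_lexWord (k : ℕ) (hk : 0 < k) (n : ℕ) :
    k * ∑ i ∈ Finset.range (k ^ n), eqPairs none (lexWord k hk n i) ≤ n * k ^ n := by
  induction n with
  | zero => simp [lexWord, eqPairs]
  | succ n ih =>
    rw [pow_succ, sum_range_mul_digits]
    have h : ∀ q, ∑ r ∈ Finset.range k, eqPairs none (lexWord k hk (n + 1) (q * k + r)) ≤
        k * eqPairs none (lexWord k hk n q) + 1 := by
      intro q
      rw [Finset.sum_range]
      simp only [lexWord_succ k hk n q _ (Fin.is_lt _), eqPairs_snoc, Fin.eta,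
        Finset.sum_add_distrib, Option.or_none]
      have : ∑ r : Fin k, (if (lexWord k hk n q).getLast? = some r then 1 else 0) ≤ 1 := by
        cases (lexWord k hk n q).getLast? <;> simp
      simp only [Finset.sum_const, Finset.card_univ, Fintype.card_fin, smul_eq_mul]
      omega
    have h2 := Finset.sum_le_sum (fun q (_ : q ∈ Finset.range (k ^ n)) => h q)
    rw [Finset.sum_add_distrib, ← Finset.mul_sum] at h2
    simp only [Finset.sum_const, Finset.card_range, smul_eq_mul, mul_one] at h2
    calc _ ≤ k * (k * ∑ i ∈ Finset.range (k ^ n), eqPairs none (lexWord k hk n i) + k ^ n) :=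
          Nat.mul_le_mul_left _ h2
      _ ≤ k * (n * k ^ n + k ^ n) := by gcongr
      _ = _ := by ring

lemma eqPairs_wn (k : ℕ) (hk : 0 < k) (n : ℕ) :
    k * eqPairs none (wn k hk n) ≤ n * k ^ n + k * k ^ n := by
  have h := eqPairs_flatten_le (lexWord k hk n) (k ^ n)
  rw [Finset.sum_add_distrib] at h
  simp only [Finset.sum_const, Finset.card_range, smul_eq_mul, mul_one] at h
  calc _ ≤ _ := Nat.mul_le_mul_left k h
    _ ≤ _ := by rw [mul_add]; exact Nat.add_le_add_right (sum_eqPairs_lexWord k hk n) _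

lemma length_wn (k : ℕ) (hk : 0 < k) (n : ℕ) : (wn k hk n).length = n * k ^ n := by
  simp [wn, List.length_flatten, List.map_map, Function.comp_def, lexWord, mul_comm]

lemma xPrefix_succ (k : ℕ) (hk : 0 < k) (m : ℕ) :
    xPrefix k hk (m + 1) =
      xPrefix k hk m ++ (wn k hk (m + 1) ++ (wn k hk (m + 1)).reverse) := by
  simp [xPrefix, List.range_succ]

lemma length_xPrefix_succ (k : ℕ) (hk : 0 < k) (m : ℕ) :
    (xPrefix k hk (m + 1)).length =
      (xPrefix k hk m).length + 2 * ((m + 1) * k ^ (m + 1)) := by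
  simp only [xPrefix_succ, List.length_append, List.length_reverse, length_wn]; ring

lemma length_xPrefix_ge (k : ℕ) (hk : 0 < k) (m : ℕ) :
    2 * (m * k ^ m) ≤ (xPrefix k hk m).length := by
  cases m with
  | zero => simp
  | succ m => rw [length_xPrefix_succ]; omega

lemma le_length_xPrefix (k : ℕ) (hk : 0 < k) (m : ℕ) : m ≤ (xPrefix k hk m).length := by
  have h := length_xPrefix_ge k hk m
  have h2 : m * 1 ≤ m * k ^ m := Nat.mul_le_mul_left _ (Nat.pow_pos hk)
  omega

lemma eqPairs_xPrefix (k : ℕ) (hk : 0 < k) (hk2 : 3 ≤ k) (m : ℕ) :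
    k * eqPairs none (xPrefix k hk m) ≤ (xPrefix k hk m).length + 8 * (k * k ^ m) := by
  induction m with
  | zero => simp [xPrefix, eqPairs]
  | succ m ih =>
    rw [length_xPrefix_succ, xPrefix_succ]
    set P := xPrefix k hk m
    set w := wn k hk (m + 1)
    have h1 := eqPairs_append_le none P (w ++ w.reverse)
    have h2 := eqPairs_append_le none w w.reverse
    rw [eqPairs_reverse] at h2
    have h3 : k * eqPairs none w ≤ (m + 1) * k ^ (m + 1) + k * k ^ (m + 1) :=
      eqPairs_wn k hk (m + 1)
    have h4 : k * eqPairs none (P ++ (w ++ w.reverse)) ≤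
        k * (eqPairs none P + 2 * eqPairs none w + 2) := Nat.mul_le_mul_left _ (by omega)
    have h5 : k * (eqPairs none P + 2 * eqPairs none w + 2) =
      k * eqPairs none P + 2 * (k * eqPairs none w) + 2 * k := by ring
    have h6 : k * 1 ≤ k * k ^ m := Nat.mul_le_mul_left _ (Nat.pow_pos hk)
    have h7 : 3 * (k * k ^ m) ≤ k * k ^ (m + 1) := by
      rw [pow_succ']; nlinarith [Nat.mul_le_mul_right (k * k ^ m) hk2]
    omega

lemma foldl_toggle_xPrefix (k : ℕ) (hk : 0 < k) (m : ℕ) :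
    (xPrefix k hk m).foldl toggle [] = [] := by
  induction m with
  | zero => rfl
  | succ m ih =>
    rw [xPrefix_succ, List.foldl_append, ih]
    exact foldl_toggle_palindrome _ List.isChain_nil

lemma xPrefix_prefix (k : ℕ) (hk : 0 < k) {m n : ℕ} (h : m ≤ n) :
    xPrefix k hk m <+: xPrefix k hk n := by
  induction n, h using Nat.le_induction with
  | base => exact List.prefix_rfl
  | succ n _ ih => rw [xPrefix_succ]; exact ih.trans (List.prefix_append _ _)

lemma map_x_eq_xPrefix (k : ℕ) (hk : 0 < k) (m : ℕ) :
    (List.range (xPrefix k hk m).length).map (x k hk) = xPrefix k hk m := by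
  apply List.ext_getElem
  · simp
  · intro i h1 h2
    have h3 : i < (xPrefix k hk (i + 1)).length := le_length_xPrefix k hk (i + 1)
    simp only [List.getElem_map, List.getElem_range, x, List.getD_eq_getElem _ _ h3]
    rcases le_total m (i + 1) with h | h
    · exact ((xPrefix_prefix k hk h).getElem h2).symm
    · exact (xPrefix_prefix k hk h).getElem h3

/-! ### The compression ratio -/

lemma log_add_two_le (k : ℕ) (hk : 7 ≤ k) :
    6 * Real.log ((k : ℝ) + 2) ≤ 7 * Real.log (k : ℝ) := by
  have hk' : (7 : ℝ) ≤ k := by exact_mod_cast hk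
  have h : ((k : ℝ) + 2) ^ 6 ≤ (k : ℝ) ^ 7 := by
    calc ((k : ℝ) + 2) ^ 6 ≤ (9 / 7 * (k : ℝ)) ^ 6 := by gcongr; linarith
      _ = (9 / 7) ^ 6 * (k : ℝ) ^ 6 := by ring
      _ ≤ k * (k : ℝ) ^ 6 := by gcongr; norm_num; linarith
      _ = _ := by ring
  have := Real.log_le_log (by positivity) h
  rw [Real.log_pow, Real.log_pow] at this
  exact_mod_cast this

lemma outputCount_xPrefix_le (k : ℕ) (hk0 : 0 < k) (hk : 7 ≤ k) (m : ℕ) (hm : 100 ≤ m) :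
    (outputCount (xPrefix k hk0 m) : ℝ) ≤ 0.842 * ((xPrefix k hk0 m).length : ℝ) := by
  have h1 := outputCount_bound _ (foldl_toggle_xPrefix k hk0 m)
  have h2 := eqPairs_xPrefix k hk0 (by omega) m
  have h3 := length_xPrefix_ge k hk0 m
  set N := (xPrefix k hk0 m).length
  set E := eqPairs none (xPrefix k hk0 m)
  have h4 : 200 * k ^ m ≤ N := by nlinarith [Nat.mul_le_mul_right (k ^ m) hm]
  have h5 : 25 * (k * E) ≤ 25 * N + k * N := by nlinarith [Nat.mul_le_mul_left k h4]
  have h6 : 25 * 7 * E ≤ 25 * N + 7 * N := by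
    by_contra hc
    push Not at hc
    nlinarith [Nat.mul_le_mul_right N hk, Nat.mul_lt_mul_of_pos_left hc hk0]
  have h1' : (4 : ℝ) * outputCount (xPrefix k hk0 m) ≤ 3 * N + 2 * E := by exact_mod_cast h1
  have h6' : (25 : ℝ) * 7 * E ≤ 25 * N + 7 * N := by exact_mod_cast h6
  have : (0 : ℝ) ≤ N := by positivity
  linarith

/-- For `k ≥ 7`, the deterministic pushdown transducer `𝒯_k` compresses the
normal sequence `x = w₁·w̃₁·w₂·w̃₂·w₃·w̃₃·⋯`: the compression ratio
`ρ = liminf_n c(n)·log(k+2)/(n·log k)` is strictly less than 1, where `c(n)` is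
the number of output symbols written after reading the length-`n` prefix of `x`. -/
theorem transducer_compresses_x (k : ℕ) (hk : 7 ≤ k) :
    Filter.liminf
      (fun n : ℕ =>
        (outputCount ((List.range n).map (x k (by omega))) : ℝ) *
          Real.log ((k : ℝ) + 2) / ((n : ℝ) * Real.log (k : ℝ)))
      Filter.atTop < 1 := by
  have hk0 : 0 < k := by omega
  have hk' : (7 : ℝ) ≤ k := by exact_mod_cast hk
  have hlog : 0 < Real.log (k : ℝ) := Real.log_pos (by linarith)
  have hlog2 : 0 ≤ Real.log ((k : ℝ) + 2) := Real.log_nonneg (by linarith)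
  refine lt_of_le_of_lt (Filter.liminf_le_of_frequently_le (a := 0.99) ?_ ?_) (by norm_num)
  · rw [Filter.frequently_atTop]
    intro M
    refine ⟨(xPrefix k hk0 (M + 100)).length,
      le_trans (by omega) (le_length_xPrefix k hk0 (M + 100)), ?_⟩
    have hpos : 0 < (xPrefix k hk0 (M + 100)).length :=
      lt_of_lt_of_le (by omega) (le_length_xPrefix k hk0 (M + 100))
    rw [map_x_eq_xPrefix]
    have h1 := outputCount_xPrefix_le k hk0 hk (M + 100) (by omega)
    have h2 := log_add_two_le k hk
    set N := (xPrefix k hk0 (M + 100)).length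
    have hN : (0 : ℝ) < N := by exact_mod_cast hpos
    rw [div_le_iff₀ (by positivity)]
    -- `0.842 · 7/6 < 0.99`
    calc _ ≤ 0.842 * (N : ℝ) * (7 / 6 * Real.log (k : ℝ)) := by gcongr; linarith
      _ = (0.842 * 7 / 6) * (N * Real.log (k : ℝ)) := by ring
      _ ≤ 0.99 * (N * Real.log (k : ℝ)) := by gcongr; norm_num
  · exact Filter.isBoundedUnder_of ⟨0, fun n => by
      have : (0 : ℝ) ≤ n := by positivity
      positivity⟩
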